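/- arXiv:2010.15204 — 3 statements merged into one kernel-verified Lean document; each statement's English description precedes it below -/
import Mathlib

section
/- Let γ₁, γ₂ : [a,b] → ℝ³ be constant-speed curves with L(γ₁) = L(γ₂) and |γ₁(t)| = |γ₂(t)| ≥ 1 for all t ∈ [a,b]. Then H(γ₁) = H(γ₂), and hence E(γ₁) = E(γ₂). -/
open MeasureTheory Set Real
open scoped ENNReal NNReal RealInnerProductSpace

noncomputable section

abbrev E3 := EuclideanSpace ℝ (Fin 3)

/-- The horizon of a curve: the measure, counted with multiplicity, of the set of points
`p` of the unit sphere whose tangent plane `{x : ⟨x,p⟩ = 1}` meets the curve. -/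
def horizon (a b : ℝ) (γ : ℝ → E3) : ℝ≥0∞ :=
  ∫⁻ p : Metric.sphere (0 : E3) 1,
    ({t ∈ Set.Ico a b | ⟪γ t, (p : E3)⟫ = 1}.encard : ℝ≥0∞)
      ∂((volume : Measure E3).toSphere)

/-!
The tangent plane at a unit vector `p` contains `γ t` exactly when `p` lies on the cone
`{x | ⟪γ t, x⟫ = ‖x‖}`. The number `N x` of such times depends only on the direction of `x`, so the
horizon is the dimension times the integral of `N` over the unit ball. The map
`(t, x + s • γ t) ↦ (s, x)`, where `x` runs over the cone of `γ t`, has exactly `N x` preimages of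
`(s, x)`, and by the area formula the horizon is the integral over time of a density in `γ t` and
`deriv γ t`. The density is invariant under linear isometries, hence determined by `‖γ t‖`,
`‖deriv γ t‖` and `⟪γ t, deriv γ t⟫`. The height gives the first and, on differentiating `‖γ t‖²`,
the last; the arc length gives the second. Times with `‖γ t‖ ≤ 1` contribute nothing: there a
tangency forces `p = γ t`, and a Lipschitz curve is negligible on the sphere.
-/

open Filter Module Metric
open scoped Topology

section AreaFormula

lemma toENNReal_encard_iUnion {α : Type*} {s : ℕ → Set α}
    (hs : Pairwise (Function.onFun Disjoint s)) :
    ((⋃ n, s n).encard : ℝ≥0∞) = ∑' n, ((s n).encard : ℝ≥0∞) := by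
  let _ : MeasurableSpace α := ⊤
  simpa only [Measure.count_apply MeasurableSpace.measurableSet_top] using
    measure_iUnion (μ := Measure.count) hs fun _ => MeasurableSpace.measurableSet_top

lemma toENNReal_encard_inter_preimage_singleton_of_injOn {α β : Type*} {f : α → β} {s : Set α}
    (hf : InjOn f s) (y : β) :
    ((s ∩ f ⁻¹' {y}).encard : ℝ≥0∞) = (f '' s).indicator 1 y := by
  by_cases hy : y ∈ f '' s
  · obtain ⟨x, hx, rfl⟩ := hy
    have hfib : s ∩ f ⁻¹' {f x} = {x} :=
      Subset.antisymm (fun z hz => hf hz.1 hx hz.2) (singleton_subset_iff.2 ⟨hx, rfl⟩)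
    simp [hfib, mem_image_of_mem f hx]
  · have hfib : s ∩ f ⁻¹' {y} = ∅ :=
      eq_empty_of_forall_notMem fun z hz => hy ⟨z, hz.1, hz.2⟩
    simp [hfib, hy]

variable {F : Type*} [NormedAddCommGroup F] [NormedSpace ℝ F] [FiniteDimensional ℝ F]
  {f : F → F} {s : Set F}

lemma exists_injOn_of_approximatesLinearOn (f : F → F) (A : F →L[ℝ] F) :
    ∃ r : ℝ≥0, r ≠ 0 ∧ (A.det ≠ 0 → ∀ u, ApproximatesLinearOn f A u r → InjOn f u) := by
  by_cases hA : A.det = 0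
  · exact ⟨1, one_ne_zero, fun h => absurd hA h⟩
  rcases subsingleton_or_nontrivial F with hF | hF
  · exact ⟨1, one_ne_zero, fun _ u _ => injOn_of_subsingleton f u⟩
  obtain ⟨A, rfl⟩ : ∃ A' : F ≃L[ℝ] F, (A' : F →L[ℝ] F) = A :=
    ⟨A.toContinuousLinearEquivOfDetNeZero hA, by ext; rfl⟩
  have hpos : 0 < ‖(A.symm : F →L[ℝ] F)‖₊⁻¹ := inv_pos.2 A.nnnorm_symm_pos
  exact ⟨_, (half_pos hpos).ne', fun _ u hu => hu.injOn (Or.inr (half_lt_self hpos))⟩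

lemma differentiableAt_of_det_fderiv_ne_zero {x : F} (h : (fderiv ℝ f x).det ≠ 0) :
    DifferentiableAt ℝ f x := by
  rcases subsingleton_or_nontrivial F with hF | hF
  · exact (hasFDerivAt_of_subsingleton f x).differentiableAt
  by_contra hf
  rw [fderiv_zero_of_not_differentiableAt hf] at h
  exact h (LinearMap.det_zero'')

variable [MeasurableSpace F] [BorelSpace F]

lemma exists_measurable_partition_injOn (h0 : ∀ x ∈ s, (fderiv ℝ f x).det ≠ 0) :
    ∃ t : ℕ → Set F, Pairwise (Function.onFun Disjoint t) ∧ (∀ n, MeasurableSet (t n)) ∧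
      s ⊆ ⋃ n, t n ∧ ∀ n, InjOn f (s ∩ t n) := by
  rcases s.eq_empty_or_nonempty with rfl | hs
  · exact ⟨fun _ => ∅, fun _ _ _ => disjoint_bot_left, fun _ => .empty, empty_subset _, by simp⟩
  choose r hr hinj using exists_injOn_of_approximatesLinearOn f
  obtain ⟨t, A, hdisj, hmeas, hcover, happrox, hA⟩ :=
    exists_partition_approximatesLinearOn_of_hasFDerivWithinAt
      f s (fderiv ℝ f) (fun x hx =>
        (differentiableAt_of_det_fderiv_ne_zero (h0 x hx)).hasFDerivAt.hasFDerivWithinAt) r hr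
  refine ⟨t, hdisj, hmeas, hcover, fun n => ?_⟩
  obtain ⟨y, hy, hAy⟩ := hA hs n
  exact hinj (A n) (hAy ▸ h0 y hy) _ (happrox n)

variable (μ : Measure F) [μ.IsAddHaarMeasure]

lemma area_formula_of_det_ne_zero (hs : MeasurableSet s)
    (h0 : ∀ x ∈ s, (fderiv ℝ f x).det ≠ 0) :
    Measurable (fun y => ((s ∩ f ⁻¹' {y}).encard : ℝ≥0∞)) ∧
      ∫⁻ y, ((s ∩ f ⁻¹' {y}).encard : ℝ≥0∞) ∂μ =
        ∫⁻ x in s, ENNReal.ofReal |(fderiv ℝ f x).det| ∂μ := by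
  obtain ⟨t, hdisj, hmeas, hcover, hinj⟩ := exists_measurable_partition_injOn h0
  have hst : ∀ n, MeasurableSet (s ∩ t n) := fun n => hs.inter (hmeas n)
  have hderiv : ∀ n, ∀ x ∈ s ∩ t n, HasFDerivWithinAt f (fderiv ℝ f x) (s ∩ t n) x :=
    fun n x hx => (differentiableAt_of_det_fderiv_ne_zero (h0 x hx.1)).hasFDerivAt.hasFDerivWithinAt
  have hdisj' : Pairwise (Function.onFun Disjoint fun n => s ∩ t n) := fun i j hij =>
    (hdisj hij).mono inter_subset_right inter_subset_right
  have himage : ∀ n, MeasurableSet (f '' (s ∩ t n)) := fun n =>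
    measurable_image_of_fderivWithin (hst n) (hderiv n) (hinj n)
  have hs_eq : s = ⋃ n, s ∩ t n := by rw [← inter_iUnion, inter_eq_left.2 hcover]
  have hcount : (fun y => ((s ∩ f ⁻¹' {y}).encard : ℝ≥0∞)) =
      fun y => ∑' n, (f '' (s ∩ t n)).indicator 1 y := by
    funext y
    simp only [← toENNReal_encard_inter_preimage_singleton_of_injOn (hinj _)]
    rw [← toENNReal_encard_iUnion fun i j hij =>
      (hdisj' hij).mono inter_subset_left inter_subset_left, ← iUnion_inter, ← hs_eq]
  have hind : ∀ n, Measurable ((f '' (s ∩ t n)).indicator (1 : F → ℝ≥0∞)) := fun n =>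
    measurable_one.indicator (himage n)
  refine ⟨hcount ▸ Measurable.tsum hind, ?_⟩
  calc ∫⁻ y, ((s ∩ f ⁻¹' {y}).encard : ℝ≥0∞) ∂μ
      = ∑' n, μ (f '' (s ∩ t n)) := by
        rw [hcount, lintegral_tsum fun n => (hind n).aemeasurable]
        simp only [lintegral_indicator_one (himage _)]
    _ = ∑' n, ∫⁻ x in s ∩ t n, ENNReal.ofReal |(fderiv ℝ f x).det| ∂μ := by
        simp only [lintegral_abs_det_fderiv_eq_addHaar_image μ (hst _) (hderiv _) (hinj _)]
    _ = ∫⁻ x in s, ENNReal.ofReal |(fderiv ℝ f x).det| ∂μ := by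
        rw [← lintegral_iUnion hst hdisj', ← hs_eq]

lemma addHaar_image_inter_det_eq_zero
    (hnull : μ (f '' (s ∩ {x | ¬ DifferentiableAt ℝ f x})) = 0) :
    μ (f '' (s ∩ {x | (fderiv ℝ f x).det = 0})) = 0 := by
  have hsplit : s ∩ {x | (fderiv ℝ f x).det = 0} ⊆ (s ∩ {x | ¬ DifferentiableAt ℝ f x}) ∪
      {x | DifferentiableAt ℝ f x ∧ (fderiv ℝ f x).det = 0} := fun x hx =>
    (em (DifferentiableAt ℝ f x)).elim (fun h => .inr ⟨h, hx.2⟩) fun h => .inl ⟨hx.1, h⟩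
  refine measure_mono_null (image_mono hsplit) ?_
  rw [image_union]
  exact measure_union_null hnull (addHaar_image_eq_zero_of_det_fderivWithin_eq_zero μ
    (fun x hx => hx.1.hasFDerivAt.hasFDerivWithinAt) fun x hx => hx.2)

theorem area_formula (hs : MeasurableSet s)
    (hnull : μ (f '' (s ∩ {x | ¬ DifferentiableAt ℝ f x})) = 0) :
    AEMeasurable (fun y => ((s ∩ f ⁻¹' {y}).encard : ℝ≥0∞)) μ ∧
      ∫⁻ y, ((s ∩ f ⁻¹' {y}).encard : ℝ≥0∞) ∂μ =
        ∫⁻ x in s, ENNReal.ofReal |(fderiv ℝ f x).det| ∂μ := by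
  set Z := {x | (fderiv ℝ f x).det = 0}
  have hZ : MeasurableSet Z :=
    (ContinuousLinearMap.continuous_det.measurable.comp (measurable_fderiv ℝ f))
      (measurableSet_singleton 0)
  obtain ⟨hmeas, hint⟩ :=
    area_formula_of_det_ne_zero (f := f) μ (hs.diff hZ) fun x hx => hx.2
  have hcount : (fun y => ((s ∩ f ⁻¹' {y}).encard : ℝ≥0∞)) =ᵐ[μ]
      fun y => (((s \ Z) ∩ f ⁻¹' {y}).encard : ℝ≥0∞) := by
    filter_upwards [compl_mem_ae_iff.2 (addHaar_image_inter_det_eq_zero μ hnull)] with y hy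
    congr 2
    exact Subset.antisymm (fun x hx => ⟨⟨hx.1, fun hxZ => hy ⟨x, ⟨hx.1, hxZ⟩, hx.2⟩⟩, hx.2⟩)
      (inter_subset_inter_left _ sdiff_subset)
  have hzero : ∫⁻ x in s ∩ Z, ENNReal.ofReal |(fderiv ℝ f x).det| ∂μ = 0 :=
    setLIntegral_eq_zero (hs.inter hZ) fun x hx => by simp [show (fderiv ℝ f x).det = 0 from hx.2]
  refine ⟨⟨_, hmeas, hcount⟩, ?_⟩
  rw [lintegral_congr_ae hcount, hint, ← lintegral_inter_add_sdiff _ s hZ, hzero, zero_add]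

lemma addHaar_image_eq_zero_of_locallyLipschitzOn (hs : μ s = 0) (hf : LocallyLipschitzOn s f) :
    μ (f '' s) = 0 := by
  have := isAddHaarMeasure_hausdorffMeasure (E := F)
  have hμH : μ ≪ μH[finrank ℝ F] := Measure.absolutelyContinuous_isAddHaarMeasure _ _
  have hHμ : μH[finrank ℝ F] ≪ μ := Measure.absolutelyContinuous_isAddHaarMeasure _ _
  have hf' : ∀ x ∈ s, ∃ K : ℝ≥0, ∃ t ∈ 𝓝[s] x, LipschitzOnWith K f t := fun x hx => hf hx
  choose! K t ht hL using hf'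
  obtain ⟨c, hcs, hc, hsub⟩ := TopologicalSpace.countable_cover_nhdsWithin ht
  have hcover : f '' s ⊆ ⋃ x ∈ c, f '' (t x ∩ s) := by
    rintro _ ⟨y, hy, rfl⟩
    obtain ⟨x, hx, hyx⟩ := mem_iUnion₂.1 (hsub hy)
    exact mem_iUnion₂.2 ⟨x, hx, mem_image_of_mem f ⟨hyx, hy⟩⟩
  refine measure_mono_null hcover ((measure_biUnion_null_iff hc).2 fun x hx => hμH ?_)
  have himage := ((hL x (hcs hx)).mono (inter_subset_left (t := s))).hausdorffMeasure_image_le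
    (d := finrank ℝ F) (by positivity)
  rw [hHμ (measure_mono_null inter_subset_right hs), mul_zero] at himage
  exact le_antisymm himage zero_le

end AreaFormula

section ConeProjection

lemma ne_zero_of_one_lt_norm {V : Type*} [NormedAddCommGroup V] {v : V} (hv : 1 < ‖v‖) : v ≠ 0 :=
  norm_pos_iff.1 (one_pos.trans hv)

lemma sq_norm_sub_one_pos {V : Type*} [NormedAddCommGroup V] {v : V} (hv : 1 < ‖v‖) :
    0 < ‖v‖ ^ 2 - 1 :=
  sub_pos.2 (one_lt_pow₀ hv two_ne_zero)

variable {E : Type*} [NormedAddCommGroup E] [InnerProductSpace ℝ E]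

/-- The common value of `⟪g, x⟫` and `‖x‖` at the point `x = coneProj g y`; it is the solution `m`
of `(‖g‖² - 1) m² = ‖g‖² ‖y‖² - ⟪g, y⟫²`, whose right side is unchanged by moving `y` along `g`. -/
def coneRadius (g y : E) : ℝ := √((‖g‖ ^ 2 * ‖y‖ ^ 2 - ⟪g, y⟫ ^ 2) / (‖g‖ ^ 2 - 1))

/-- The multiple of `g` that has to be subtracted from `y` to reach the tangency cone of `g`. -/
def coneShift (g y : E) : ℝ := (⟪g, y⟫ - coneRadius g y) / ‖g‖ ^ 2

/-- The projection of `y` along `g` onto the tangency cone `{x | ⟪g, x⟫ = ‖x‖}` of `g`; meaningful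
for `1 < ‖g‖`. -/
def coneProj (g y : E) : E := y - coneShift g y • g

variable {g x y : E}

lemma coneProj_add_coneShift_smul (g y : E) : coneProj g y + coneShift g y • g = y :=
  sub_add_cancel y _

lemma sq_coneRadius (hg : 1 < ‖g‖) (y : E) :
    coneRadius g y ^ 2 = (‖g‖ ^ 2 * ‖y‖ ^ 2 - ⟪g, y⟫ ^ 2) / (‖g‖ ^ 2 - 1) := by
  refine sq_sqrt (div_nonneg (sub_nonneg.2 ?_) (sq_norm_sub_one_pos hg).le)
  rw [← mul_pow]
  exact sq_le_sq' (neg_le_of_abs_le (abs_real_inner_le_norm g y)) (real_inner_le_norm g y)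

lemma inner_coneProj (hg : g ≠ 0) (y : E) : ⟪g, coneProj g y⟫ = coneRadius g y := by
  have hg2 : ‖g‖ ^ 2 ≠ 0 := pow_ne_zero 2 (norm_ne_zero_iff.2 hg)
  rw [coneProj, inner_sub_right, inner_smul_right, real_inner_self_eq_norm_sq, coneShift,
    div_mul_cancel₀ _ hg2, sub_sub_cancel]

lemma norm_sub_smul_sq (g y : E) (s : ℝ) :
    ‖y - s • g‖ ^ 2 = ‖y‖ ^ 2 - 2 * s * ⟪g, y⟫ + s ^ 2 * ‖g‖ ^ 2 := by
  rw [norm_sub_sq_real, inner_smul_right, norm_smul, mul_pow, norm_eq_abs, sq_abs,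
    real_inner_comm]
  ring

lemma norm_coneProj (hg : 1 < ‖g‖) (y : E) : ‖coneProj g y‖ = coneRadius g y := by
  have hg2 : ‖g‖ ^ 2 ≠ 0 := pow_ne_zero 2 (one_pos.trans hg).ne'
  have hm := sq_coneRadius hg y
  rw [eq_div_iff (sq_norm_sub_one_pos hg).ne'] at hm
  refine (sq_eq_sq₀ (norm_nonneg _) (sqrt_nonneg _)).1 ?_
  rw [coneProj, norm_sub_smul_sq, coneShift]
  change _ = coneRadius g y ^ 2
  field_simp [hg2]
  linear_combination -hm

lemma inner_coneProj_eq_norm (hg : 1 < ‖g‖) (y : E) : ⟪g, coneProj g y⟫ = ‖coneProj g y‖ := by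
  rw [inner_coneProj (ne_zero_of_one_lt_norm hg), norm_coneProj hg]

lemma coneRadius_add_smul (hg : 1 < ‖g‖) (hx : ⟪g, x⟫ = ‖x‖) (s : ℝ) :
    coneRadius g (x + s • g) = ‖x‖ := by
  have hnorm := norm_sub_smul_sq g x (-s)
  rw [neg_smul, sub_neg_eq_add] at hnorm
  have hsq : (‖g‖ ^ 2 * ‖x + s • g‖ ^ 2 - ⟪g, x + s • g⟫ ^ 2) / (‖g‖ ^ 2 - 1) = ‖x‖ ^ 2 := by
    rw [hnorm, inner_add_right, inner_smul_right, real_inner_self_eq_norm_sq, hx,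
      div_eq_iff (sq_norm_sub_one_pos hg).ne']
    ring
  rw [coneRadius, hsq, sqrt_sq (norm_nonneg x)]

lemma coneShift_add_smul (hg : 1 < ‖g‖) (hx : ⟪g, x⟫ = ‖x‖) (s : ℝ) :
    coneShift g (x + s • g) = s := by
  rw [coneShift, coneRadius_add_smul hg hx, inner_add_right, inner_smul_right,
    real_inner_self_eq_norm_sq, hx, add_sub_cancel_left,
    mul_div_cancel_right₀ _ (pow_ne_zero 2 (one_pos.trans hg).ne')]

lemma coneProj_add_smul (hg : 1 < ‖g‖) (hx : ⟪g, x⟫ = ‖x‖) (s : ℝ) :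
    coneProj g (x + s • g) = x := by
  rw [coneProj, coneShift_add_smul hg hx, add_sub_cancel_right]

variable (ρ : E ≃ₗᵢ[ℝ] E)

lemma coneShift_map (g y : E) : coneShift (ρ g) (ρ y) = coneShift g y := by
  simp only [coneShift, coneRadius, ρ.norm_map, ρ.inner_map_map]

lemma coneProj_map (g y : E) : coneProj (ρ g) (ρ y) = ρ (coneProj g y) := by
  simp only [coneProj, coneShift_map, map_sub, map_smul]

lemma contDiffAt_coneShift (hg : 1 < ‖g‖) (hy : coneProj g y ≠ 0) :
    ContDiffAt ℝ 1 (fun q : E × E => coneShift q.1 q.2) (g, y) := by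
  have hinner : ContDiffAt ℝ 1 (fun q : E × E => ⟪q.1, q.2⟫) (g, y) :=
    contDiffAt_fst.inner ℝ contDiffAt_snd
  have hfst : ContDiffAt ℝ 1 (fun q : E × E => ‖q.1‖ ^ 2) (g, y) := contDiffAt_fst.norm_sq ℝ
  have hsnd : ContDiffAt ℝ 1 (fun q : E × E => ‖q.2‖ ^ 2) (g, y) := contDiffAt_snd.norm_sq ℝ
  have hradius : coneRadius g y ≠ 0 := norm_coneProj hg y ▸ norm_ne_zero_iff.2 hy
  refine (hinner.sub (ContDiffAt.sqrt (((hfst.mul hsnd).sub (hinner.pow 2)).div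
    (hfst.sub contDiffAt_const) (sq_norm_sub_one_pos hg).ne') fun h => ?_)).div hfst
    (pow_ne_zero 2 (one_pos.trans hg).ne')
  exact hradius (sqrt_eq_zero'.2 h.le)

end ConeProjection

section Determinant

lemma det_prod_snd_sub_smulRight {R M : Type*} [CommRing R] [AddCommGroup M] [Module R M]
    [Module.Free R M] [Module.Finite R M] (f : Dual R (R × M)) (u g : M) :
    LinearMap.det (f.prod (.snd R R M - (LinearMap.fst R R M).smulRight u - f.smulRight g)) =
      f (1, u) := by
  set h : Dual R (R × M) := LinearMap.fst R R M
  have hfactor : f.prod (.snd R R M - h.smulRight u - f.smulRight g) =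
      LinearMap.transvection ((f - h) ∘ₗ LinearMap.transvection h (0, u + g)) (1, -g) ∘ₗ
        LinearMap.transvection h (0, -(u + g)) := by
    refine LinearMap.ext fun z => ?_
    have hinv : LinearMap.transvection h (0, u + g) (LinearMap.transvection h (0, -(u + g)) z) =
        z := by
      ext
      · simp [h, LinearMap.transvection.apply]
      · simp only [LinearMap.transvection.apply, LinearMap.fst_apply, Prod.smul_mk, smul_eq_mul,
          mul_zero, Prod.fst_add, add_zero, Prod.snd_add, h]
        module
    rw [LinearMap.comp_apply, LinearMap.transvection.apply _ (1, -g), LinearMap.comp_apply,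
      LinearMap.sub_apply, hinv, LinearMap.transvection.apply]
    ext
    · simp [h]
    · change z.2 - z.1 • u - f z • g = z.2 + z.1 • -(u + g) + (f z - z.1) • -g
      module
  rw [hfactor, LinearMap.det_comp, LinearMap.transvection.det, LinearMap.transvection.det]
  simp [h, LinearMap.transvection.apply]

end Determinant

section ConeCoords

variable {E : Type*} [NormedAddCommGroup E] [InnerProductSpace ℝ E]

/-- The map sending a time `t` and a point `y = x + s • γ t`, where `x` lies on the tangency cone of
`γ t`, to the pair `(s, x)`. -/
def coneCoords (γ : ℝ → E) (q : ℝ × E) : ℝ × E :=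
  (coneShift (γ q.1) q.2, coneProj (γ q.1) q.2)

variable {γ : ℝ → E} {t : ℝ} {x y w : E}

lemma encard_inter_preimage_coneCoords {B : Set ℝ} (hB : ∀ t ∈ B, 1 < ‖γ t‖) (s : ℝ) (x : E) :
    (B ×ˢ univ ∩ coneCoords γ ⁻¹' {(s, x)}).encard = {t ∈ B | ⟪γ t, x⟫ = ‖x‖}.encard := by
  have hinj : Function.Injective fun t => (t, x + s • γ t) := fun _ _ h => congrArg Prod.fst h
  rw [← hinj.encard_image]
  congr 1
  ext ⟨t, y⟩
  simp only [coneCoords, mem_inter_iff, mem_prod, mem_univ, and_true, mem_preimage,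
    mem_singleton_iff, Prod.mk.injEq, mem_image, mem_ofPred_eq]
  constructor
  · rintro ⟨ht, rfl, rfl⟩
    exact ⟨t, ⟨ht, inner_coneProj_eq_norm (hB t ht) y⟩, rfl, coneProj_add_coneShift_smul _ y⟩
  · rintro ⟨t, ⟨ht, hx⟩, rfl, rfl⟩
    exact ⟨ht, coneShift_add_smul (hB t ht) hx s, coneProj_add_smul (hB t ht) hx s⟩

lemma contDiffAt_coneProj {g : E} (hg : 1 < ‖g‖) (hy : coneProj g y ≠ 0) :
    ContDiffAt ℝ 1 (fun q : E × E => coneProj q.1 q.2) (g, y) := by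
  simp only [coneProj]
  exact contDiffAt_snd.sub ((contDiffAt_coneShift hg hy).smul contDiffAt_fst)

lemma exists_lipschitzOnWith_coneCoords {C : ℝ≥0} (hγ : LipschitzWith C γ)
    (ht : 1 < ‖γ t‖) (hy : coneProj (γ t) y ≠ 0) :
    ∃ K : ℝ≥0, ∃ U ∈ 𝓝 (t, y), LipschitzOnWith K (coneCoords γ) U := by
  obtain ⟨K, V, hV, hK⟩ :=
    ((contDiffAt_coneShift ht hy).prodMk (contDiffAt_coneProj ht hy)).exists_lipschitzOnWith
  have hlift : LipschitzWith (max (C * 1) 1) fun q : ℝ × E => (γ q.1, q.2) :=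
    (hγ.comp LipschitzWith.prod_fst).prodMk LipschitzWith.prod_snd
  exact ⟨_, _, hlift.continuous.continuousAt.preimage_mem_nhds hV,
    hK.comp (f := fun q : ℝ × E => (γ q.1, q.2)) hlift.lipschitzOnWith (mapsTo_preimage _ V)⟩

lemma differentiableAt_coneCoords (hγ : DifferentiableAt ℝ γ t)
    (ht : 1 < ‖γ t‖) (hy : coneProj (γ t) y ≠ 0) :
    DifferentiableAt ℝ (coneCoords γ) (t, y) := by
  have hpair := ((contDiffAt_coneShift ht hy).prodMk (contDiffAt_coneProj ht hy)).differentiableAt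
    one_ne_zero
  have hlift : DifferentiableAt ℝ (fun q : ℝ × E => (γ q.1, q.2)) (t, y) :=
    (hγ.comp (t, y) differentiableAt_fst).prodMk differentiableAt_snd
  exact hpair.comp (f := fun q : ℝ × E => (γ q.1, q.2)) (t, y) hlift

/-- Under the hypotheses, `x = coneProj (γ t) y` moves along `γ t` when `(t, y)` moves in the
direction `(1, s • γ')`; the value follows by differentiating `⟪γ, x⟫ = ‖x‖` in this direction. -/
lemma fderiv_coneShift_apply {f : ℝ × E →L[ℝ] ℝ}
    (hf : HasFDerivAt (fun q : ℝ × E => coneShift (γ q.1) q.2) f (t, y))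
    (hγ : HasDerivAt γ w t) (ht : 1 < ‖γ t‖) (hy : coneProj (γ t) y ≠ 0) :
    f (1, coneShift (γ t) y • w) = ⟪w, coneProj (γ t) y⟫ / (‖γ t‖ ^ 2 - 1) := by
  set c := f (1, coneShift (γ t) y • w)
  set v : ℝ → E := fun r => y + (r - t) • coneShift (γ t) y • w
  have hvt : v t = y := by simp [v]
  have hv : HasDerivAt v (coneShift (γ t) y • w) t := by
    simpa only [one_smul, id_eq] using
      (((hasDerivAt_id t).sub_const t).smul_const (coneShift (γ t) y • w)).const_add y
  have hshift : HasDerivAt (fun r => coneShift (γ r) (v r)) c t :=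
    HasFDerivAt.comp_hasDerivAt (l := fun q : ℝ × E => coneShift (γ q.1) q.2) t (by rwa [hvt])
      ((hasDerivAt_id t).prodMk hv)
  have hproj : HasDerivAt (fun r => coneProj (γ r) (v r)) (-(c • γ t)) t := by
    refine (hv.fun_sub (hshift.fun_smul hγ)).congr_deriv ?_
    rw [hvt]
    module
  have hcone : (fun r => ⟪γ r, coneProj (γ r) (v r)⟫ ^ 2) =ᶠ[𝓝 t]
      fun r => ⟪coneProj (γ r) (v r), coneProj (γ r) (v r)⟫ := by
    filter_upwards [hγ.continuousAt.norm.eventually_const_lt ht] with r hr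
    rw [inner_coneProj_eq_norm hr, real_inner_self_eq_norm_sq]
  have hderiv := ((hγ.inner ℝ hproj).fun_pow 2).unique
    ((hproj.inner ℝ hproj).congr_of_eventuallyEq hcone)
  simp only [hvt, inner_neg_right, inner_neg_left, inner_smul_right, real_inner_smul_left,
    real_inner_self_eq_norm_sq, real_inner_comm (γ t) (coneProj (γ t) y),
    inner_coneProj_eq_norm ht, Nat.cast_ofNat, Nat.add_one_sub_one, pow_one] at hderiv
  rw [eq_div_iff (sq_norm_sub_one_pos ht).ne']
  refine mul_left_cancel₀ (norm_ne_zero_iff.2 hy) ?_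
  linear_combination -hderiv / 2

variable [FiniteDimensional ℝ E]

lemma det_fderiv_coneCoords (hγ : DifferentiableAt ℝ γ t) (ht : 1 < ‖γ t‖)
    (hy : coneProj (γ t) y ≠ 0) :
    (fderiv ℝ (coneCoords γ) (t, y)).det =
      ⟪deriv γ t, coneProj (γ t) y⟫ / (‖γ t‖ ^ 2 - 1) := by
  set f := fderiv ℝ (fun q : ℝ × E => coneShift (γ q.1) q.2) (t, y)
  have hf : HasFDerivAt (fun q : ℝ × E => coneShift (γ q.1) q.2) f (t, y) :=
    (differentiableAt_coneCoords hγ ht hy).fst.hasFDerivAt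
  have hγ' : HasFDerivAt (fun q : ℝ × E => γ q.1)
      (fderiv ℝ γ t ∘L ContinuousLinearMap.fst ℝ ℝ E) (t, y) :=
    hγ.hasFDerivAt.comp (f := Prod.fst) (t, y) hasFDerivAt_fst
  have hcoords : HasFDerivAt (coneCoords γ) _ (t, y) :=
    hf.prodMk (hasFDerivAt_snd.fun_sub (hf.fun_smul hγ'))
  have hlin : ((fderiv ℝ (coneCoords γ) (t, y) : ℝ × E →L[ℝ] ℝ × E) : ℝ × E →ₗ[ℝ] ℝ × E) =
      LinearMap.prod f (.snd ℝ ℝ E -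
        (LinearMap.fst ℝ ℝ E).smulRight (coneShift (γ t) y • deriv γ t) -
          (f : ℝ × E →ₗ[ℝ] ℝ).smulRight (γ t)) := by
    rw [hcoords.fderiv]
    refine LinearMap.ext fun z => Prod.ext rfl ?_
    change z.2 - (coneShift (γ t) y • fderiv ℝ γ t z.1 + f z • γ t) =
      z.2 - z.1 • coneShift (γ t) y • deriv γ t - f z • γ t
    rw [fderiv_eq_smul_deriv]
    module
  rw [ContinuousLinearMap.det, hlin, det_prod_snd_sub_smulRight]
  exact fderiv_coneShift_apply hf hγ.hasDerivAt ht hy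

end ConeCoords

section Count

variable {E : Type*} [NormedAddCommGroup E] [InnerProductSpace ℝ E]

/-- The number of times `t ∈ B` at which `x` lies on the tangency cone of `γ t`. For a unit vector
`x` these are the times at which `γ` meets the tangent plane of the unit sphere at `x`; in this form
the count is invariant under positive scaling of `x`. -/
def tangencyCount (B : Set ℝ) (γ : ℝ → E) (x : E) : ℝ≥0∞ :=
  {t ∈ B | ⟪γ t, x⟫ = ‖x‖}.encard

/-- The pairs `(s, x)` with `0 < s < 1` and `0 < ‖x‖ < 1`: a bounded test region for `coneCoords`
that avoids the vertices of the cones. -/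
def coneRegion (E : Type*) [NormedAddCommGroup E] : Set (ℝ × E) :=
  Ioo 0 1 ×ˢ (ball 0 1 \ {0})

lemma measurableSet_coneRegion {V : Type*} [NormedAddCommGroup V] [MeasurableSpace V]
    [BorelSpace V] : MeasurableSet (coneRegion V) :=
  measurableSet_Ioo.prod (measurableSet_ball.diff (measurableSet_singleton 0))

variable {B : Set ℝ} {γ : ℝ → E}

lemma encard_inter_coneRegion_preimage (hB : ∀ t ∈ B, 1 < ‖γ t‖) (p : ℝ × E) :
    (((B ×ˢ univ ∩ coneCoords γ ⁻¹' coneRegion E) ∩ coneCoords γ ⁻¹' {p}).encard : ℝ≥0∞) =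
      (coneRegion E).indicator (fun p => tangencyCount B γ p.2) p := by
  by_cases hp : p ∈ coneRegion E
  · rw [indicator_of_mem hp, inter_assoc, ← preimage_inter,
      inter_eq_right.2 (singleton_subset_iff.2 hp), tangencyCount,
      encard_inter_preimage_coneCoords hB p.1 p.2]
  · rw [indicator_of_notMem hp, inter_assoc, ← preimage_inter, inter_singleton_eq_empty.2 hp]
    simp

variable [FiniteDimensional ℝ E] [MeasurableSpace E] [BorelSpace E]

/-- The contribution of a point `g` moving with velocity `w` to the horizon, per unit time and up to
the factor `finrank ℝ E`. -/
def horizonDensity (g w : E) : ℝ≥0∞ :=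
  ∫⁻ y in {y | (coneShift g y, coneProj g y) ∈ coneRegion E},
    ENNReal.ofReal |⟪w, coneProj g y⟫ / (‖g‖ ^ 2 - 1)|

lemma horizonDensity_map (ρ : E ≃ₗᵢ[ℝ] E) (g w : E) :
    horizonDensity (ρ g) (ρ w) = horizonDensity g w := by
  have hregion : ρ ⁻¹' {y | (coneShift (ρ g) y, coneProj (ρ g) y) ∈ coneRegion E} =
      {y | (coneShift g y, coneProj g y) ∈ coneRegion E} := by
    ext y
    simp [coneRegion, coneShift_map, coneProj_map]
  rw [horizonDensity, ← ρ.measurePreserving.setLIntegral_comp_preimage_emb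
    ρ.toHomeomorph.measurableEmbedding, hregion]
  simp only [coneProj_map, ρ.inner_map_map, ρ.norm_map, horizonDensity]

lemma measurable_coneCoords (hγ : Measurable γ) : Measurable (coneCoords γ) := by
  unfold coneCoords coneProj coneShift coneRadius
  fun_prop

lemma lintegral_abs_det_fderiv_coneCoords {C : ℝ≥0} (hγ : LipschitzWith C γ)
    (hB : MeasurableSet B) (hout : ∀ t ∈ B, 1 < ‖γ t‖) :
    ∫⁻ q in B ×ˢ univ ∩ coneCoords γ ⁻¹' coneRegion E,
        ENNReal.ofReal |(fderiv ℝ (coneCoords γ) q).det| ∂(volume.prod volume) =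
      ∫⁻ t in B, horizonDensity (γ t) (deriv γ t) := by
  have hregion : MeasurableSet (coneCoords γ ⁻¹' coneRegion E) :=
    measurable_coneCoords hγ.continuous.measurable measurableSet_coneRegion
  have hdet : Measurable fun q => ENNReal.ofReal |(fderiv ℝ (coneCoords γ) q).det| :=
    ((ContinuousLinearMap.continuous_det.measurable.comp
      (measurable_fderiv ℝ (coneCoords γ))).abs).ennreal_ofReal
  rw [inter_comm, ← setLIntegral_indicator hregion, ← Measure.prod_restrict, Measure.restrict_univ,
    lintegral_prod _ (hdet.indicator hregion).aemeasurable]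
  refine setLIntegral_congr_fun_ae hB ?_
  filter_upwards [hγ.ae_differentiableAt] with t hd ht
  have hslice : MeasurableSet {y | (coneShift (γ t) y, coneProj (γ t) y) ∈ coneRegion E} :=
    measurable_prodMk_left hregion
  rw [horizonDensity, ← lintegral_indicator hslice]
  refine lintegral_congr fun y => ?_
  by_cases hy : (t, y) ∈ coneCoords γ ⁻¹' coneRegion E
  · rw [indicator_of_mem hy, det_fderiv_coneCoords hd (hout t ht) hy.2.2, indicator_of_mem]
    exact hy
  · rw [indicator_of_notMem hy, indicator_of_notMem]
    exact hy

lemma volume_image_coneCoords_not_differentiableAt_eq_zero {C : ℝ≥0} (hγ : LipschitzWith C γ)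
    (hB : ∀ t ∈ B, 1 < ‖γ t‖) :
    (volume.prod volume) (coneCoords γ '' (B ×ˢ univ ∩ coneCoords γ ⁻¹' coneRegion E ∩
      {q | ¬ DifferentiableAt ℝ (coneCoords γ) q})) = 0 := by
  refine addHaar_image_eq_zero_of_locallyLipschitzOn _ ?_ ?_
  · have hnull : ((volume : Measure ℝ).prod (volume : Measure E))
        ({t | ¬ DifferentiableAt ℝ γ t} ×ˢ univ) = 0 := by
      rw [Measure.prod_prod, ae_iff.1 hγ.ae_differentiableAt, zero_mul]
    exact measure_mono_null (t := {t | ¬ DifferentiableAt ℝ γ t} ×ˢ univ) (fun q hq =>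
      ⟨fun hd => hq.2 (differentiableAt_coneCoords hd (hB _ hq.1.1.1) hq.1.2.2.2), mem_univ _⟩)
      hnull
  · intro q hq
    obtain ⟨K, U, hU, hK⟩ := exists_lipschitzOnWith_coneCoords hγ (hB _ hq.1.1.1) hq.1.2.2.2
    exact ⟨K, U, mem_nhdsWithin_of_mem_nhds hU, hK⟩

theorem lintegral_tangencyCount {C : ℝ≥0} (hγ : LipschitzWith C γ)
    (hB : MeasurableSet B) (hout : ∀ t ∈ B, 1 < ‖γ t‖) :
    AEMeasurable (tangencyCount B γ) (volume.restrict (ball 0 1 \ {0})) ∧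
      ∫⁻ x in ball 0 1 \ {0}, tangencyCount B γ x =
        ∫⁻ t in B, horizonDensity (γ t) (deriv γ t) := by
  have hS : MeasurableSet (B ×ˢ univ ∩ coneCoords γ ⁻¹' coneRegion E) :=
    (hB.prod .univ).inter
      (measurable_coneCoords hγ.continuous.measurable measurableSet_coneRegion)
  obtain ⟨hmeas, harea⟩ := area_formula (volume.prod volume) hS
    (volume_image_coneCoords_not_differentiableAt_eq_zero hγ hout)
  simp only [encard_inter_coneRegion_preimage hout] at hmeas harea
  rw [aemeasurable_indicator_iff measurableSet_coneRegion, coneRegion,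
    ← Measure.prod_restrict] at hmeas
  have hM : AEMeasurable (tangencyCount B γ) (volume.restrict (ball 0 1 \ {0})) :=
    (AEStronglyMeasurable.of_comp_snd hmeas.aestronglyMeasurable (by simp)).aemeasurable
  refine ⟨hM, ?_⟩
  rw [lintegral_indicator measurableSet_coneRegion, coneRegion, ← Measure.prod_restrict] at harea
  have hprod := lintegral_prod_mul (μ := volume.restrict (Ioo (0 : ℝ) 1)) (f := 1)
    aemeasurable_const hM
  simp only [Pi.one_apply, one_mul, lintegral_one,
    Measure.restrict_apply_univ, Real.volume_Ioo, sub_zero, ENNReal.ofReal_one] at hprod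
  rw [← hprod, harea]
  exact lintegral_abs_det_fderiv_coneCoords hγ hB hout

end Count

section SphereBall

variable {E : Type*} [NormedAddCommGroup E] [NormedSpace ℝ E] [FiniteDimensional ℝ E]
  [MeasurableSpace E] [BorelSpace E] (μ : Measure E) [μ.IsAddHaarMeasure]

lemma measurePreserving_smul_sphere :
    MeasurePreserving (fun q : sphere (0 : E) 1 × Ioi (0 : ℝ) => q.2.1 • (q.1 : E))
      (μ.toSphere.prod (.volumeIoiPow (finrank ℝ E - 1))) (μ.restrict {0}ᶜ) := by
  have hval : MeasurePreserving (Subtype.val : ({0}ᶜ : Set E) → E) (μ.comap Subtype.val)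
      (μ.restrict {0}ᶜ) :=
    ⟨measurable_subtype_coe, map_comap_subtype_coe (measurableSet_singleton 0).compl μ⟩
  exact hval.comp (μ.measurePreserving_homeomorphUnitSphereProd.symm
    (homeomorphUnitSphereProd E).toMeasurableEquiv)

lemma measurePreserving_smul_sphere_ball :
    MeasurePreserving (fun q : sphere (0 : E) 1 × Ioi (0 : ℝ) => q.2.1 • (q.1 : E))
      (μ.toSphere.prod ((Measure.volumeIoiPow (finrank ℝ E - 1)).restrict
        (Iio ⟨1, mem_Ioi.2 one_pos⟩)))
      (μ.restrict (ball 0 1 \ {0})) := by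
  have h := (measurePreserving_smul_sphere μ).restrict_preimage (s := ball 0 1) measurableSet_ball
  have hpre : (fun q : sphere (0 : E) 1 × Ioi (0 : ℝ) => q.2.1 • (q.1 : E)) ⁻¹' ball 0 1 =
      univ ×ˢ Iio ⟨1, mem_Ioi.2 one_pos⟩ := by
    ext ⟨p, l, hl⟩
    simp [norm_smul, abs_of_pos (mem_Ioi.1 hl), ← Subtype.coe_lt_coe]
  rwa [hpre, Measure.restrict_restrict measurableSet_ball, ← sdiff_eq, ← Measure.prod_restrict,
    Measure.restrict_univ] at h

lemma lintegral_toSphere_eq_lintegral_ball [Nontrivial E] {N : E → ℝ≥0∞}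
    (hN : AEMeasurable N (μ.restrict (ball 0 1 \ {0})))
    (hhom : ∀ l : ℝ, 0 < l → ∀ x, N (l • x) = N x) :
    ∫⁻ p : sphere (0 : E) 1, N p ∂μ.toSphere =
      finrank ℝ E * ∫⁻ x in ball 0 1 \ {0}, N x ∂μ := by
  have hmp := measurePreserving_smul_sphere_ball μ
  set ν := (Measure.volumeIoiPow (finrank ℝ E - 1)).restrict (Iio ⟨1, mem_Ioi.2 one_pos⟩)
  have hradial (q : sphere (0 : E) 1 × Ioi (0 : ℝ)) : N (q.2.1 • (q.1 : E)) = N q.1 :=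
    hhom _ q.2.2 _
  have hνuniv : (finrank ℝ E : ℝ≥0∞) * ν univ = 1 := by
    have hpos : (0 : ℝ) < finrank ℝ E := Nat.cast_pos.2 finrank_pos
    rw [Measure.restrict_apply_univ, Measure.volumeIoiPow_apply_Iio, one_pow,
      Nat.cast_pred finrank_pos, sub_add_cancel, ← ENNReal.ofReal_natCast,
      ← ENNReal.ofReal_mul hpos.le, mul_one_div_cancel hpos.ne', ENNReal.ofReal_one]
  have hsphere : AEMeasurable (fun p : sphere (0 : E) 1 => N p) μ.toSphere := by
    have hprod := hN.comp_quasiMeasurePreserving hmp.quasiMeasurePreserving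
    refine (AEStronglyMeasurable.of_comp_fst (ν := ν) (hprod.congr (.of_forall
      hradial)).aestronglyMeasurable fun hν => ?_).aemeasurable
    simp [hν] at hνuniv
  rw [← hmp.map_eq, lintegral_map' (hmp.map_eq ▸ hN) hmp.aemeasurable]
  simp only [hradial]
  have hmul := lintegral_prod_mul (ν := ν) (g := 1) hsphere aemeasurable_const
  simp only [Pi.one_apply, mul_one, lintegral_one] at hmul
  rw [hmul, mul_left_comm, hνuniv, mul_one]

end SphereBall

section HorizonFormula

lemma addHaar_range_eq_zero_of_finrank_lt {E F : Type*} [NormedAddCommGroup E] [NormedSpace ℝ E]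
    [FiniteDimensional ℝ E] [MeasurableSpace E] [BorelSpace E] [NormedAddCommGroup F]
    [NormedSpace ℝ F] [FiniteDimensional ℝ F] (μ : Measure E) [μ.IsAddHaarMeasure]
    (hdim : finrank ℝ F < finrank ℝ E) {f : F → E} (hf : LocallyLipschitz f) :
    μ (range f) = 0 := by
  refine measure_zero_of_dimH_lt (d := finrank ℝ E)
    (Measure.absolutelyContinuous_isAddHaarMeasure μ μH[(finrank ℝ E : ℝ)]) ?_
  refine (dimH_range_le_of_locally_lipschitzOn hf).trans_lt ?_
  rw [Real.dimH_univ_eq_finrank]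
  exact_mod_cast hdim

variable {E : Type*} [NormedAddCommGroup E] [InnerProductSpace ℝ E]

lemma eq_norm_smul_of_inner_eq_norm {g x : E} (hg : ‖g‖ ≤ 1) (hx : x ≠ 0) (h : ⟪g, x⟫ = ‖x‖) :
    x = ‖x‖ • g := by
  have hg1 : ‖g‖ = 1 := hg.antisymm <| le_of_mul_le_mul_right
    (by simpa only [one_mul, h] using real_inner_le_norm g x) (norm_pos_iff.2 hx)
  have hpar := inner_eq_norm_mul_iff_real.1 (show ⟪g, x⟫ = ‖g‖ * ‖x‖ by rw [h, hg1, one_mul])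
  rw [hpar, hg1, one_smul]

lemma tangencyCount_smul (B : Set ℝ) (γ : ℝ → E) {l : ℝ} (hl : 0 < l) (x : E) :
    tangencyCount B γ (l • x) = tangencyCount B γ x := by
  simp only [tangencyCount, inner_smul_right, norm_smul, norm_of_nonneg hl.le,
    mul_right_inj' hl.ne']

variable [FiniteDimensional ℝ E] [MeasurableSpace E] [BorelSpace E]

/-- The horizon of a curve in an arbitrary finite-dimensional inner product space, over an
arbitrary set `B` of times. -/
def sphericalHorizon (B : Set ℝ) (γ : ℝ → E) : ℝ≥0∞ :=
  ∫⁻ p : sphere (0 : E) 1, {t ∈ B | ⟪γ t, (p : E)⟫ = 1}.encard ∂(volume : Measure E).toSphere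

lemma sphericalHorizon_congr {B : Set ℝ} {γ₁ γ₂ : ℝ → E} (h : EqOn γ₁ γ₂ B) :
    sphericalHorizon B γ₁ = sphericalHorizon B γ₂ := by
  refine lintegral_congr fun p => ?_
  congr 2
  exact sep_ext_iff.2 fun t ht => by rw [h ht]

variable {B : Set ℝ} {γ : ℝ → E} {C : ℝ≥0}

lemma tangencyCount_ae_eq (hdim : 2 < finrank ℝ E) (hγ : LipschitzWith C γ) (B : Set ℝ) :
    tangencyCount B γ =ᵐ[volume.restrict (ball 0 1 \ {0})]
      tangencyCount {t ∈ B | 1 < ‖γ t‖} γ := by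
  have hcone : LocallyLipschitz fun q : ℝ × ℝ => q.1 • γ q.2 :=
    (contDiff_fst.smul contDiff_snd : ContDiff ℝ 1 fun z : ℝ × E => z.1 • z.2).locallyLipschitz.comp
      (LipschitzWith.prod_fst.prodMk (hγ.comp LipschitzWith.prod_snd)).locallyLipschitz
  have hrange : ∀ᵐ x : E, x ∉ range fun q : ℝ × ℝ => q.1 • γ q.2 :=
    measure_eq_zero_iff_ae_notMem.1
      (addHaar_range_eq_zero_of_finrank_lt volume (by simpa using hdim) hcone)
  filter_upwards [ae_restrict_of_ae hrange,
    ae_restrict_mem (measurableSet_ball.diff (measurableSet_singleton 0))] with x hx hx0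
  rw [tangencyCount, tangencyCount]
  congr 2 with t
  refine and_congr_left fun ht => (and_iff_left ?_).symm
  by_contra! hle
  exact hx ⟨(‖x‖, t), (eq_norm_smul_of_inner_eq_norm hle hx0.2 ht).symm⟩

theorem sphericalHorizon_eq_lintegral_horizonDensity (hdim : 2 < finrank ℝ E)
    (hγ : LipschitzWith C γ) (hB : MeasurableSet B) :
    sphericalHorizon B γ =
      finrank ℝ E * ∫⁻ t in {t ∈ B | 1 < ‖γ t‖}, horizonDensity (γ t) (deriv γ t) := by
  have : Nontrivial E := nontrivial_of_finrank_pos (two_pos.trans hdim)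
  have hout : MeasurableSet {t ∈ B | 1 < ‖γ t‖} :=
    hB.inter (measurableSet_lt measurable_const hγ.continuous.norm.measurable)
  obtain ⟨hmeas, hcount⟩ := lintegral_tangencyCount hγ hout fun t ht => ht.2
  have hae := tangencyCount_ae_eq hdim hγ B
  rw [← hcount, ← lintegral_congr_ae hae, ← lintegral_toSphere_eq_lintegral_ball volume
    (hmeas.congr hae.symm) fun l hl x => tangencyCount_smul B γ hl x, sphericalHorizon]
  simp only [tangencyCount, norm_eq_of_mem_sphere]

end HorizonFormula

section Speed

lemma lipschitzOnWith_Icc_iff_eVariationOn_le {X : Type*} [PseudoEMetricSpace X] {γ : ℝ → X}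
    {a b : ℝ} {K : ℝ≥0} : LipschitzOnWith K γ (Icc a b) ↔
      ∀ x ∈ Icc a b, ∀ y ∈ Icc a b, x ≤ y → eVariationOn γ (Icc x y) ≤ K * edist x y := by
  constructor
  · intro h x hx y hy hxy
    have hid : eVariationOn id (Icc x y) = edist x y := by
      have hmono := (monotone_id.monotoneOn (Icc x y)).eVariationOn_eq (left_mem_Icc.2 hxy)
        (right_mem_Icc.2 hxy)
      rwa [inter_self, id, id, ← abs_of_nonneg (sub_nonneg.2 hxy), ← Real.dist_eq, ← edist_dist,
        edist_comm] at hmono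
    rw [← hid]
    exact (h.mono (Icc_subset_Icc hx.1 hy.2)).comp_eVariationOn_le (mapsTo_id _)
  · intro h
    have hle : ∀ x ∈ Icc a b, ∀ y ∈ Icc a b, x ≤ y → edist (γ x) (γ y) ≤ K * edist x y :=
      fun x hx y hy hxy => (eVariationOn.edist_le γ (left_mem_Icc.2 hxy)
        (right_mem_Icc.2 hxy)).trans (h x hx y hy hxy)
    intro x hx y hy
    rcases le_total x y with hxy | hyx
    · exact hle x hx y hy hxy
    · rw [edist_comm, edist_comm x]
      exact hle y hy x hx hyx

lemma lipschitzOnWith_of_hasConstantSpeedOnWith {X : Type*} [PseudoEMetricSpace X] {γ : ℝ → X}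
    {a b : ℝ} {K : ℝ≥0} (h : HasConstantSpeedOnWith γ (Icc a b) K) :
    LipschitzOnWith K γ (Icc a b) := by
  refine lipschitzOnWith_Icc_iff_eVariationOn_le.2 fun x hx y hy hxy => ?_
  rw [← inter_eq_right.2 (Icc_subset_Icc hx.1 hy.2), h hx hy, ENNReal.ofReal_mul K.coe_nonneg,
    ENNReal.ofReal_coe_nnreal, edist_comm, edist_dist, Real.dist_eq,
    abs_of_nonneg (sub_nonneg.2 hxy)]

lemma speed_eq_of_eVariationOn_eq {X Y : Type*} [PseudoEMetricSpace X] [PseudoEMetricSpace Y]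
    {γ₁ : ℝ → X} {γ₂ : ℝ → Y} {a b : ℝ} {C₁ C₂ : ℝ≥0} (hab : a < b)
    (h₁ : HasConstantSpeedOnWith γ₁ (Icc a b) C₁) (h₂ : HasConstantSpeedOnWith γ₂ (Icc a b) C₂)
    (hlen : eVariationOn γ₁ (Icc a b) = eVariationOn γ₂ (Icc a b)) : C₁ = C₂ := by
  have hba : 0 < b - a := sub_pos.2 hab
  have hlen₁ := h₁ (left_mem_Icc.2 hab.le) (right_mem_Icc.2 hab.le)
  have hlen₂ := h₂ (left_mem_Icc.2 hab.le) (right_mem_Icc.2 hab.le)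
  rw [inter_self] at hlen₁ hlen₂
  rw [hlen₁, hlen₂, ENNReal.ofReal_eq_ofReal_iff (by positivity) (by positivity)] at hlen
  exact NNReal.coe_injective (mul_right_cancel₀ hba.ne' hlen)

lemma exists_lipschitzWith_eqOn_Icc {X : Type*} [PseudoEMetricSpace X] {γ : ℝ → X} {a b : ℝ}
    {K : ℝ≥0} (hab : a ≤ b) (hγ : LipschitzOnWith K γ (Icc a b)) :
    ∃ g : ℝ → X, LipschitzWith K g ∧ EqOn g γ (Icc a b) := by
  refine ⟨IccExtend hab ((Icc a b).domRestrict γ), ?_, fun t ht => IccExtend_of_mem hab _ ht⟩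
  have hlip := (lipschitzOnWith_iff_restrict.1 hγ).comp (LipschitzWith.projIcc hab)
  rwa [mul_one] at hlip

variable {F : Type*} [NormedAddCommGroup F] [NormedSpace ℝ F] [FiniteDimensional ℝ F]
  {γ γ₁ γ₂ : ℝ → F} {C : ℝ≥0} {a b : ℝ}

lemma intervalIntegrable_deriv_of_lipschitzWith (hγ : LipschitzWith C γ) (x y : ℝ) :
    IntervalIntegrable (deriv γ) volume x y :=
  (intervalIntegrable_const (c := (C : ℝ))).mono_fun' (aestronglyMeasurable_deriv γ _)
    (.of_forall fun _ => norm_deriv_le_of_lipschitz hγ)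

lemma integral_deriv_eq_sub_of_lipschitzWith (hγ : LipschitzWith C γ) (x y : ℝ) :
    ∫ t in x..y, deriv γ t = γ y - γ x := by
  refine (SeparatingDual.eq_iff_forall_dual_eq (R := ℝ)).2 fun ℓ => ?_
  have hac := (ℓ.lipschitz.comp hγ).lipschitzOnWith (s := uIcc x y)
    |>.absolutelyContinuousOnInterval
  rw [← ℓ.intervalIntegral_comp_comm (intervalIntegrable_deriv_of_lipschitzWith hγ x y), map_sub]
  refine (intervalIntegral.integral_congr_ae ?_).trans hac.integral_deriv_eq_sub
  filter_upwards [hγ.ae_differentiableAt] with t ht _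
  exact (ℓ.hasFDerivAt.comp_hasDerivAt t ht.hasDerivAt).deriv.symm

lemma eVariationOn_Icc_le_integral_norm_deriv (hγ : LipschitzWith C γ) (hab : a ≤ b) :
    eVariationOn γ (Icc a b) ≤ ENNReal.ofReal (∫ t in a..b, ‖deriv γ t‖) := by
  have hint (x y : ℝ) : IntervalIntegrable (fun t => ‖deriv γ t‖) volume x y :=
    (intervalIntegrable_deriv_of_lipschitzWith hγ x y).norm
  set S : ℝ → ℝ := fun y => ∫ t in a..y, ‖deriv γ t‖
  have hS (x y : ℝ) : S y - S x = ∫ t in x..y, ‖deriv γ t‖ :=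
    intervalIntegral.integral_interval_sub_left (hint a y) (hint a x)
  have hle {x y : ℝ} (hxy : x ≤ y) : ‖γ y - γ x‖ ≤ S y - S x := by
    rw [hS, ← integral_deriv_eq_sub_of_lipschitzWith hγ]
    exact intervalIntegral.norm_integral_le_integral_norm hxy
  have hmono : Monotone S := fun x y hxy => sub_nonneg.1 ((norm_nonneg _).trans (hle hxy))
  calc eVariationOn γ (Icc a b) ≤ eVariationOn S (Icc a b) := by
        refine iSup_mono fun p => Finset.sum_le_sum fun i _ => ?_
        rw [edist_dist, edist_dist, dist_eq_norm, Real.dist_eq]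
        exact ENNReal.ofReal_le_ofReal ((hle (p.2.2.1 i.le_succ)).trans (le_abs_self _))
    _ ≤ ENNReal.ofReal (S b - S a) := by
        simpa only [inter_self] using
          ((hmono.monotoneOn _).eVariationOn_eq (left_mem_Icc.2 hab) (right_mem_Icc.2 hab)).le
    _ = ENNReal.ofReal (∫ t in a..b, ‖deriv γ t‖) := by rw [hS]

lemma ae_norm_deriv_le_of_eVariationOn_le (hγ₂ : LipschitzWith C γ₂)
    (hvar : ∀ x ∈ Icc a b, ∀ y ∈ Icc a b, eVariationOn γ₁ (Icc x y) ≤ eVariationOn γ₂ (Icc x y)) :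
    ∀ᵐ t, t ∈ Ioo a b → ‖deriv γ₁ t‖ ≤ ‖deriv γ₂ t‖ := by
  have hint := (intervalIntegrable_deriv_of_lipschitzWith hγ₂ a b).norm
  filter_upwards [hint.ae_hasDerivAt_integral] with t ht htab
  have htu : t ∈ uIcc a b := Icc_subset_uIcc (Ioo_subset_Icc_self htab)
  by_cases hd : DifferentiableAt ℝ γ₁ t
  swap
  · rw [deriv_zero_of_not_differentiableAt hd, norm_zero]
    exact norm_nonneg _
  have hright : 𝓝[>] t ≤ 𝓝[≠] t := nhdsWithin_mono t fun s hs => ne_of_gt hs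
  have hslope₁ := (hasDerivAt_iff_tendsto_slope.1 hd.hasDerivAt).norm.mono_left hright
  have hslope₂ := (hasDerivAt_iff_tendsto_slope.1 (ht htu t htu)).mono_left hright
  refine le_of_tendsto_of_tendsto hslope₁ hslope₂ ?_
  filter_upwards [Ioo_mem_nhdsGT htab.2] with s hs
  have hle : edist (γ₁ s) (γ₁ t) ≤ ENNReal.ofReal (∫ r in t..s, ‖deriv γ₂ r‖) :=
    calc edist (γ₁ s) (γ₁ t) ≤ eVariationOn γ₁ (Icc t s) :=
          eVariationOn.edist_le γ₁ (right_mem_Icc.2 hs.1.le) (left_mem_Icc.2 hs.1.le)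
      _ ≤ eVariationOn γ₂ (Icc t s) :=
          hvar t (Ioo_subset_Icc_self htab) s ⟨htab.1.le.trans hs.1.le, hs.2.le⟩
      _ ≤ ENNReal.ofReal (∫ r in t..s, ‖deriv γ₂ r‖) :=
          eVariationOn_Icc_le_integral_norm_deriv hγ₂ hs.1.le
  rw [edist_dist, dist_eq_norm, ENNReal.ofReal_le_ofReal_iff
    (intervalIntegral.integral_nonneg hs.1.le fun r _ => norm_nonneg _)] at hle
  rw [slope_def_module, slope_def_module, intervalIntegral.integral_same, sub_zero, norm_smul,
    norm_of_nonneg (inv_nonneg.2 (sub_nonneg.2 hs.1.le)), smul_eq_mul]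
  exact mul_le_mul_of_nonneg_left hle (inv_nonneg.2 (sub_nonneg.2 hs.1.le))

lemma ae_norm_deriv_eq_of_eVariationOn_eq {C₁ C₂ : ℝ≥0} (hγ₁ : LipschitzWith C₁ γ₁)
    (hγ₂ : LipschitzWith C₂ γ₂)
    (hvar : ∀ x ∈ Icc a b, ∀ y ∈ Icc a b, eVariationOn γ₁ (Icc x y) = eVariationOn γ₂ (Icc x y)) :
    ∀ᵐ t, t ∈ Ioo a b → ‖deriv γ₁ t‖ = ‖deriv γ₂ t‖ := by
  filter_upwards [
    ae_norm_deriv_le_of_eVariationOn_le hγ₁ fun x hx y hy => (hvar x hx y hy).ge,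
    ae_norm_deriv_le_of_eVariationOn_le hγ₂ fun x hx y hy => (hvar x hx y hy).le]
    with t hle₂ hle₁ ht using (hle₁ ht).antisymm (hle₂ ht)

end Speed

section Congruence

variable {E : Type*} [NormedAddCommGroup E] [InnerProductSpace ℝ E]

lemma inner_deriv_eq_of_norm_eventuallyEq {γ₁ γ₂ : ℝ → E} {t : ℝ} (h₁ : DifferentiableAt ℝ γ₁ t)
    (h₂ : DifferentiableAt ℝ γ₂ t) (h : (fun s => ‖γ₁ s‖) =ᶠ[𝓝 t] fun s => ‖γ₂ s‖) :
    ⟪γ₁ t, deriv γ₁ t⟫ = ⟪γ₂ t, deriv γ₂ t⟫ := by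
  have hsq : (fun s => ‖γ₁ s‖ ^ 2) =ᶠ[𝓝 t] fun s => ‖γ₂ s‖ ^ 2 := h.fun_comp (· ^ 2)
  have hderiv := h₁.hasDerivAt.norm_sq.unique (h₂.hasDerivAt.norm_sq.congr_of_eventuallyEq hsq)
  exact mul_left_cancel₀ two_ne_zero hderiv

lemma exists_linearIsometryEquiv_apply_eq {g₁ g₂ w₁ w₂ : E} (hg : ‖g₁‖ = ‖g₂‖) (hw : ‖w₁‖ = ‖w₂‖)
    (hgw : ⟪g₁, w₁⟫ = ⟪g₂, w₂⟫) : ∃ ρ : E ≃ₗᵢ[ℝ] E, ρ g₁ = g₂ ∧ ρ w₁ = w₂ := by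
  set σ := (ℝ ∙ (g₁ - g₂))ᗮ.reflection
  have hσg : σ g₁ = g₂ := Submodule.reflection_sub hg
  set u := σ w₁
  have hu : ‖u‖ = ‖w₂‖ := (σ.norm_map w₁).trans hw
  have hgu : ⟪u - w₂, g₂⟫ = 0 := by
    rw [inner_sub_left, ← hσg, σ.inner_map_map, hσg, real_inner_comm, hgw, real_inner_comm,
      sub_self]
  refine ⟨σ.trans (ℝ ∙ (u - w₂))ᗮ.reflection, ?_, Submodule.reflection_sub hu⟩
  rw [LinearIsometryEquiv.trans_apply, hσg]
  exact Submodule.reflection_mem_subspace_eq_self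
    (Submodule.mem_orthogonal_singleton_iff_inner_right.2 hgu)

variable [FiniteDimensional ℝ E] [MeasurableSpace E] [BorelSpace E]

lemma horizonDensity_eq_of_norm_eq_of_inner_eq {g₁ g₂ w₁ w₂ : E} (hg : ‖g₁‖ = ‖g₂‖)
    (hw : ‖w₁‖ = ‖w₂‖) (hgw : ⟪g₁, w₁⟫ = ⟪g₂, w₂⟫) :
    horizonDensity g₁ w₁ = horizonDensity g₂ w₂ := by
  obtain ⟨ρ, rfl, rfl⟩ := exists_linearIsometryEquiv_apply_eq hg hw hgw
  exact (horizonDensity_map ρ g₁ w₁).symm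

variable {a b : ℝ} {γ₁ γ₂ : ℝ → E}

lemma sphericalHorizon_Ico_eq_of_lipschitzWith (hdim : 2 < finrank ℝ E) {C₁ C₂ : ℝ≥0}
    (hγ₁ : LipschitzWith C₁ γ₁) (hγ₂ : LipschitzWith C₂ γ₂)
    (hvar : ∀ x ∈ Icc a b, ∀ y ∈ Icc a b, eVariationOn γ₁ (Icc x y) = eVariationOn γ₂ (Icc x y))
    (hheight : ∀ t ∈ Icc a b, ‖γ₁ t‖ = ‖γ₂ t‖) :
    sphericalHorizon (Ico a b) γ₁ = sphericalHorizon (Ico a b) γ₂ := by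
  have hout : {t ∈ Ico a b | 1 < ‖γ₁ t‖} = {t ∈ Ico a b | 1 < ‖γ₂ t‖} :=
    sep_ext_iff.2 fun t ht => by rw [hheight t (Ico_subset_Icc_self ht)]
  have hmeas : MeasurableSet {t ∈ Ico a b | 1 < ‖γ₂ t‖} :=
    measurableSet_Ico.inter (measurableSet_lt measurable_const hγ₂.continuous.norm.measurable)
  rw [sphericalHorizon_eq_lintegral_horizonDensity hdim hγ₁ measurableSet_Ico,
    sphericalHorizon_eq_lintegral_horizonDensity hdim hγ₂ measurableSet_Ico, hout]
  congr 1
  refine setLIntegral_congr_fun_ae hmeas ?_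
  filter_upwards [Measure.ae_ne volume a, ae_norm_deriv_eq_of_eVariationOn_eq hγ₁ hγ₂ hvar,
    hγ₁.ae_differentiableAt, hγ₂.ae_differentiableAt] with t hta hspeed hd₁ hd₂ ht
  have htab : t ∈ Ioo a b := ⟨ht.1.1.lt_of_ne' hta, ht.1.2⟩
  have hnorm : (fun s => ‖γ₁ s‖) =ᶠ[𝓝 t] fun s => ‖γ₂ s‖ := by
    filter_upwards [Ioo_mem_nhds htab.1 htab.2] with s hs using hheight s (Ioo_subset_Icc_self hs)
  exact horizonDensity_eq_of_norm_eq_of_inner_eq hnorm.self_of_nhds (hspeed htab)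
    (inner_deriv_eq_of_norm_eventuallyEq hd₁ hd₂ hnorm)

theorem horizon_eq_of_same_height_and_length_general (hdim : 2 < finrank ℝ E) {K : ℝ≥0}
    (hγ₁ : LipschitzOnWith K γ₁ (Icc a b))
    (hvar : ∀ x ∈ Icc a b, ∀ y ∈ Icc a b, eVariationOn γ₁ (Icc x y) = eVariationOn γ₂ (Icc x y))
    (hheight : ∀ t ∈ Icc a b, ‖γ₁ t‖ = ‖γ₂ t‖) :
    sphericalHorizon (Ico a b) γ₁ = sphericalHorizon (Ico a b) γ₂ := by
  rcases lt_or_ge b a with hba | hab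
  · rw [Ico_eq_empty hba.not_gt]
    exact sphericalHorizon_congr (eqOn_empty _ _)
  have hγ₂ : LipschitzOnWith K γ₂ (Icc a b) :=
    lipschitzOnWith_Icc_iff_eVariationOn_le.2 fun x hx y hy hxy =>
      hvar x hx y hy ▸ lipschitzOnWith_Icc_iff_eVariationOn_le.1 hγ₁ x hx y hy hxy
  obtain ⟨g₁, hg₁, heq₁⟩ := exists_lipschitzWith_eqOn_Icc hab hγ₁
  obtain ⟨g₂, hg₂, heq₂⟩ := exists_lipschitzWith_eqOn_Icc hab hγ₂
  rw [← sphericalHorizon_congr (heq₁.mono Ico_subset_Icc_self),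
    ← sphericalHorizon_congr (heq₂.mono Ico_subset_Icc_self)]
  refine sphericalHorizon_Ico_eq_of_lipschitzWith hdim hg₁ hg₂ (fun x hx y hy => ?_) fun t ht => ?_
  · have hsub : Icc x y ⊆ Icc a b := Icc_subset_Icc hx.1 hy.2
    rw [eVariationOn.congr (heq₁.mono hsub), eVariationOn.congr (heq₂.mono hsub), hvar x hx y hy]
  · rw [heq₁ ht, heq₂ ht, hheight t ht]

end Congruence

/-- Two constant speed curves with the same length and the same height function
(`|γ₁(t)| = |γ₂(t)| ≥ 1`) have the same horizon, and hence the same efficiency. -/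
theorem horizon_eq_of_same_height_and_length
    (a b : ℝ) (hab : a < b) (γ₁ γ₂ : ℝ → E3) (C₁ C₂ : ℝ≥0)
    (hcont₁ : ContinuousOn γ₁ (Set.Icc a b))
    (hcont₂ : ContinuousOn γ₂ (Set.Icc a b))
    (hspeed₁ : HasConstantSpeedOnWith γ₁ (Set.Icc a b) C₁)
    (hspeed₂ : HasConstantSpeedOnWith γ₂ (Set.Icc a b) C₂)
    (hlen : eVariationOn γ₁ (Set.Icc a b) = eVariationOn γ₂ (Set.Icc a b))
    (hheight : ∀ t ∈ Set.Icc a b, ‖γ₁ t‖ = ‖γ₂ t‖)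
    (hout : ∀ t ∈ Set.Icc a b, 1 ≤ ‖γ₁ t‖) :
    horizon a b γ₁ = horizon a b γ₂ ∧
      (horizon a b γ₁).toReal / (eVariationOn γ₁ (Set.Icc a b)).toReal =
        (horizon a b γ₂).toReal / (eVariationOn γ₂ (Set.Icc a b)).toReal := by
  obtain rfl : C₁ = C₂ := speed_eq_of_eVariationOn_eq hab hspeed₁ hspeed₂ hlen
  have hvar : ∀ x ∈ Icc a b, ∀ y ∈ Icc a b,
      eVariationOn γ₁ (Icc x y) = eVariationOn γ₂ (Icc x y) := fun x hx y hy => by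
    rw [← inter_eq_right.2 (Icc_subset_Icc hx.1 hy.2), hspeed₁ hx hy, hspeed₂ hx hy]
  have h : horizon a b γ₁ = horizon a b γ₂ :=
    horizon_eq_of_same_height_and_length_general (by simp)
      (lipschitzOnWith_of_hasConstantSpeedOnWith hspeed₁) hvar hheight
  exact ⟨h, by rw [h, hlen]⟩
end
end

section
/- For all real numbers h > 1 and α with arcsin(1/h) ≤ α ≤ π/2, one has ∫_0^{2π} (1/h²)·| √(h² − 1)·sin(α)·cos(θ) + cos(α) | dθ = (4/h²)·( √(h²·sin²(α) − 1) + cos(α)·arcsin( cot(α)/√(h² − 1) ) ). -/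
open Real

/-!
With `a = √(h² - 1) sin α > 0`, the integrand is `(a / h²) |cos θ - cos t|` where
`cos t = -cos α / a`; such a `t` exists because `a² - cos² α = h² sin² α - 1` is nonnegative.
By the symmetry `θ ↦ 2π - θ` it suffices to integrate over `[0, π]`, where cosine is decreasing
and `cos θ - cos t` therefore changes sign only at `t`.
-/

theorem integral_comp_cos_zero_two_pi {E : Type*} [NormedAddCommGroup E] [NormedSpace ℝ E]
    {f : ℝ → E}
    (hf : IntervalIntegrable (fun θ ↦ f (cos θ)) MeasureTheory.volume 0 (2 * π)) :
    ∫ θ in (0 : ℝ)..(2 * π), f (cos θ) = (2 : ℝ) • ∫ θ in (0 : ℝ)..π, f (cos θ) := by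
  have hπ : π ∈ Set.uIcc 0 (2 * π) := by
    rw [Set.uIcc_of_le two_pi_pos.le]
    constructor <;> linarith [pi_pos]
  have reflect : ∫ θ in π..(2 * π), f (cos θ) = ∫ θ in (0 : ℝ)..π, f (cos θ) :=
    calc ∫ θ in π..(2 * π), f (cos θ)
        = ∫ θ in (2 * π - π)..(2 * π - 0), f (cos θ) := by congr 1 <;> ring
      _ = ∫ θ in (0 : ℝ)..π, f (cos (2 * π - θ)) :=
          (intervalIntegral.integral_comp_sub_left (fun θ ↦ f (cos θ)) (2 * π)).symm
      _ = ∫ θ in (0 : ℝ)..π, f (cos θ) := by simp only [cos_two_pi_sub]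
  rw [← intervalIntegral.integral_add_adjacent_intervals
    (hf.mono_set (Set.uIcc_subset_uIcc_left hπ)) (hf.mono_set (Set.uIcc_subset_uIcc_right hπ)),
    reflect, two_smul]

theorem integral_cos_sub_const (a b c : ℝ) :
    ∫ θ in a..b, (cos θ - c) = sin b - sin a - (b - a) * c := by
  rw [intervalIntegral.integral_sub (by simp) (by simp), integral_cos,
    intervalIntegral.integral_const, smul_eq_mul]

theorem integral_abs_cos_sub_cos {t : ℝ} (ht : t ∈ Set.Icc 0 π) :
    ∫ θ in (0 : ℝ)..π, |cos θ - cos t| = 2 * sin t + (π - 2 * t) * cos t := by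
  have integrable (a b : ℝ) :
      IntervalIntegrable (fun θ ↦ |cos θ - cos t|) MeasureTheory.volume a b :=
    Continuous.intervalIntegrable (by fun_prop) a b
  have left : ∫ θ in (0 : ℝ)..t, |cos θ - cos t| = ∫ θ in (0 : ℝ)..t, (cos θ - cos t) := by
    refine intervalIntegral.integral_congr fun θ hθ ↦ abs_of_nonneg (sub_nonneg.2 ?_)
    rw [Set.uIcc_of_le ht.1] at hθ
    exact cos_le_cos_of_nonneg_of_le_pi hθ.1 ht.2 hθ.2
  have right : ∫ θ in t..π, |cos θ - cos t| = ∫ θ in t..π, -(cos θ - cos t) := by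
    refine intervalIntegral.integral_congr fun θ hθ ↦ abs_of_nonpos (sub_nonpos.2 ?_)
    rw [Set.uIcc_of_le ht.2] at hθ
    exact cos_le_cos_of_nonneg_of_le_pi ht.1 hθ.2 hθ.1
  rw [← intervalIntegral.integral_add_adjacent_intervals (integrable 0 t) (integrable t π),
    left, right, intervalIntegral.integral_neg, integral_cos_sub_const, integral_cos_sub_const,
    sin_zero, sin_pi]
  ring

theorem integral_abs_cos_add {x : ℝ} (hx : x ∈ Set.Icc (-1) 1) :
    ∫ θ in (0 : ℝ)..(2 * π), |cos θ + x| = 4 * (√(1 - x ^ 2) + x * arcsin x) := by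
  have cos_t : cos (arccos (-x)) = -x := cos_arccos (by linarith [hx.2]) (by linarith [hx.1])
  have sin_t : sin (arccos (-x)) = √(1 - x ^ 2) := by rw [sin_arccos, neg_sq]
  have t_eq : arccos (-x) = π / 2 + arcsin x := by rw [arccos, arcsin_neg, sub_neg_eq_add]
  have half := integral_abs_cos_sub_cos ⟨arccos_nonneg (-x), arccos_le_pi (-x)⟩
  rw [cos_t, sin_t, t_eq] at half
  simp only [sub_neg_eq_add] at half
  rw [integral_comp_cos_zero_two_pi (f := fun y ↦ |y + x|)
    (Continuous.intervalIntegrable (by fun_prop) _ _), half, smul_eq_mul]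
  ring

theorem integral_abs_mul_cos_add {a b : ℝ} (ha : 0 < a) (hb : |b| ≤ a) :
    ∫ θ in (0 : ℝ)..(2 * π), |a * cos θ + b| =
      4 * (√(a ^ 2 - b ^ 2) + b * arcsin (b / a)) := by
  have ratio_mem : b / a ∈ Set.Icc (-1) 1 := by
    rwa [Set.mem_Icc, ← abs_le, abs_div, abs_of_pos ha, div_le_one ha]
  have factor (θ : ℝ) : |a * cos θ + b| = a * |cos θ + b / a| := by
    have argument_factor : a * cos θ + b = a * (cos θ + b / a) := by field_simp
    rw [argument_factor, abs_mul, abs_of_pos ha]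
  have sqrt_factor : √(a ^ 2 - b ^ 2) = a * √(1 - (b / a) ^ 2) := by
    have radicand_factor : a ^ 2 - b ^ 2 = a ^ 2 * (1 - (b / a) ^ 2) := by field_simp
    rw [radicand_factor, sqrt_mul (sq_nonneg a), sqrt_sq ha.le]
  simp only [factor]
  rw [intervalIntegral.integral_const_mul, integral_abs_cos_add ratio_mem, sqrt_factor]
  field_simp

theorem le_sin_of_arcsin_le {x y : ℝ} (hx : x ≤ 1) (hxy : arcsin x ≤ y) (hy : y ≤ π / 2) :
    x ≤ sin y := by
  have le_sin_arcsin : x ≤ sin (arcsin x) := by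
    rcases le_total (-1) x with hx' | hx'
    · exact (sin_arcsin hx' hx).ge
    · exact hx'.trans (neg_one_le_sin _)
  exact le_sin_arcsin.trans
    (sin_le_sin_of_le_of_le_pi_div_two (neg_pi_div_two_le_arcsin x) hy hxy)

theorem instantaneous_efficiency_integral_general
    (h α : ℝ) (hh : 1 < h) (hα : 1 / h ≤ sin α) :
    ∫ θ in (0 : ℝ)..(2 * π), (1 / h ^ 2) * |√(h ^ 2 - 1) * sin α * cos θ + cos α| =
      (4 / h ^ 2) *
        (√(h ^ 2 * sin α ^ 2 - 1) + cos α * arcsin ((cos α / sin α) / √(h ^ 2 - 1))) := by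
  have h_pos : 0 < h := one_pos.trans hh
  have sin_pos : 0 < sin α := (one_div_pos.2 h_pos).trans_le hα
  have radicand_pos : 0 < h ^ 2 - 1 := sub_pos.2 (one_lt_pow₀ hh two_ne_zero)
  have amplitude_pos : 0 < √(h ^ 2 - 1) * sin α := mul_pos (sqrt_pos.2 radicand_pos) sin_pos
  have sq_sub_sq : (√(h ^ 2 - 1) * sin α) ^ 2 - cos α ^ 2 = h ^ 2 * sin α ^ 2 - 1 := by
    rw [mul_pow, sq_sqrt radicand_pos.le, cos_sq']
    ring
  have one_le : 1 ≤ h ^ 2 * sin α ^ 2 := by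
    rw [← mul_pow]
    exact one_le_pow₀ ((div_le_iff₀' h_pos).1 hα)
  have abs_cos_le : |cos α| ≤ √(h ^ 2 - 1) * sin α :=
    abs_le_of_sq_le_sq (by linarith) amplitude_pos.le
  rw [intervalIntegral.integral_const_mul, integral_abs_mul_cos_add amplitude_pos abs_cos_le,
    sq_sub_sq, div_div, mul_comm (sin α)]
  ring

/-- **Closed form of the instantaneous efficiency integral.** For `h > 1` and
`arcsin(1/h) ≤ α ≤ π/2`,
`∫₀^{2π} (1/h²)|√(h²−1) sin α cos θ + cos α| dθ
  = (4/h²)(√(h² sin²α − 1) + cos α · arcsin(cot α/√(h²−1)))`. -/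
theorem instantaneous_efficiency_integral
    (h α : ℝ) (hh : 1 < h)
    (hα₁ : Real.arcsin (1 / h) ≤ α) (hα₂ : α ≤ π / 2) :
    ∫ θ in (0:ℝ)..(2 * π),
        (1 / h ^ 2) *
          |Real.sqrt (h ^ 2 - 1) * Real.sin α * Real.cos θ + Real.cos α| =
      (4 / h ^ 2) *
        (Real.sqrt (h ^ 2 * Real.sin α ^ 2 - 1) +
          Real.cos α * Real.arcsin ((Real.cos α / Real.sin α) / Real.sqrt (h ^ 2 - 1))) :=
  instantaneous_efficiency_integral_general h α hh <|
    le_sin_of_arcsin_le (div_le_self zero_le_one hh.le) hα₁ hα₂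
end

section
/- For all real numbers h ≥ √2 and α with arcsin(√2/h) ≤ α ≤ π/2, one has (4/h²)·( √(h²·sin²(α) − 1) + cos(α)·arcsin( cot(α)/√(h² − 1) ) ) ≤ 4·√(h² − 1)/h² ≤ 2. -/
open Real

/-!
Put `k = √(h² - 1)` and `A = √(h² sin² α - 1) = √((k sin α)² - cos² α)`, and assume `cos α ≥ 0`, as
nothing changes when `α` is replaced by `π - α`. The angle `arcsin (cot α / k)` belongs to a right
triangle with hypotenuse `k sin α` and legs `cos α`, `A`, so it is at most its tangent
`cos α / A`, and it suffices that `cos² α ≤ A (k - A)`. By Pythagoras in the same triangle this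
says `k sin² α ≤ A`, which after squaring becomes `cos² α ≤ (k sin α)² cos² α`: it holds as soon as
`1 ≤ k sin α`. For `h ≥ √2` one has `1 / k ≤ √2 / h`, so `√2 / h ≤ sin α` is enough.
-/

lemma mul_arcsin_div_le_sq_div_sqrt {x r : ℝ} (hx : |x| < r) :
    x * arcsin (x / r) ≤ x ^ 2 / √(r ^ 2 - x ^ 2) := by
  have hr : 0 < r := (abs_nonneg x).trans_lt hx
  wlog hx₀ : 0 ≤ x generalizing x
  · simpa only [neg_div, arcsin_neg, neg_mul_neg, neg_sq] using
      this (x := -x) (by rwa [abs_neg]) (by linarith)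
  have tan_eq : tan (arcsin (x / r)) = x / √(r ^ 2 - x ^ 2) := by
    have hsqrt : √(1 - (x / r) ^ 2) = √(r ^ 2 - x ^ 2) / r := by
      rw [div_pow, one_sub_div (by positivity), sqrt_div' _ (sq_nonneg r), sqrt_sq hr.le]
    rw [tan_arcsin, hsqrt, div_div_div_cancel_right₀ hr.ne']
  have arcsin_le_tan : arcsin (x / r) ≤ tan (arcsin (x / r)) :=
    le_tan (arcsin_nonneg.2 (by positivity))
      (arcsin_lt_pi_div_two.2 ((div_lt_one hr).2 ((le_abs_self x).trans_lt hx)))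
  calc x * arcsin (x / r) ≤ x * (x / √(r ^ 2 - x ^ 2)) := by
        rw [← tan_eq]; gcongr
    _ = x ^ 2 / √(r ^ 2 - x ^ 2) := by ring

lemma mul_sin_sq_le_sqrt {k α : ℝ} (hα : 1 ≤ k * sin α) :
    k * sin α ^ 2 ≤ √((k * sin α) ^ 2 - cos α ^ 2) := by
  apply le_sqrt_of_sq_le
  have hcos : cos α ^ 2 ≤ (k * sin α) ^ 2 * cos α ^ 2 :=
    le_mul_of_one_le_left (sq_nonneg _) (one_le_pow₀ hα)
  calc (k * sin α ^ 2) ^ 2 = (k * sin α) ^ 2 - (k * sin α) ^ 2 * cos α ^ 2 := by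
        rw [cos_sq']; ring
    _ ≤ (k * sin α) ^ 2 - cos α ^ 2 := by gcongr

lemma sqrt_add_cos_mul_arcsin_cos_div_le {k α : ℝ} (hk : 0 ≤ k) (hα : 1 ≤ k * sin α) :
    √((k * sin α) ^ 2 - cos α ^ 2) + cos α * arcsin (cos α / (k * sin α)) ≤ k := by
  have hr : 0 < k * sin α := one_pos.trans_le hα
  have hsin : 0 < sin α := pos_of_mul_pos_right hr hk
  have hA_ge := mul_sin_sq_le_sqrt hα
  have hA : 0 < √((k * sin α) ^ 2 - cos α ^ 2) := by
    refine lt_of_lt_of_le ?_ hA_ge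
    rw [sq, ← mul_assoc]
    exact mul_pos hr hsin
  have hlt : 0 < (k * sin α) ^ 2 - cos α ^ 2 := sqrt_pos.1 hA
  have hA_sq := sq_sqrt hlt.le
  have harcsin := mul_arcsin_div_le_sq_div_sqrt (abs_lt_of_sq_lt_sq (sub_pos.1 hlt) hr.le)
  set A := √((k * sin α) ^ 2 - cos α ^ 2)
  have hcos : cos α ^ 2 ≤ (k - A) * A :=
    calc cos α ^ 2 = k * (k * sin α ^ 2) - A ^ 2 := by rw [hA_sq]; ring
      _ ≤ k * A - A ^ 2 := by gcongr
      _ = (k - A) * A := by ring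
  linarith [(div_le_iff₀ hA).2 hcos]

lemma sqrt_sub_one_le_half {x : ℝ} (hx : 0 ≤ x) : √(x - 1) ≤ x / 2 :=
  sqrt_le_iff.2 ⟨by positivity, by linarith [sq_nonneg (x / 2 - 1)]⟩

theorem instantaneous_efficiency_le_two_general (h α : ℝ) (hα : 1 ≤ √(h ^ 2 - 1) * sin α) :
    (4 / h ^ 2) *
        (√(h ^ 2 * sin α ^ 2 - 1) + cos α * arcsin ((cos α / sin α) / √(h ^ 2 - 1))) ≤
      4 * √(h ^ 2 - 1) / h ^ 2 ∧
    4 * √(h ^ 2 - 1) / h ^ 2 ≤ 2 := by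
  constructor
  · have hk : 0 < √(h ^ 2 - 1) :=
      (sqrt_nonneg _).lt_of_ne' fun hk_zero ↦ by norm_num [hk_zero] at hα
    have hA : h ^ 2 * sin α ^ 2 - 1 = (√(h ^ 2 - 1) * sin α) ^ 2 - cos α ^ 2 := by
      rw [mul_pow, sq_sqrt (sqrt_pos.1 hk).le, cos_sq']; ring
    rw [hA, div_div, mul_comm (sin α), mul_div_right_comm]
    gcongr
    exact sqrt_add_cos_mul_arcsin_cos_div_le hk.le hα
  · apply div_le_of_le_mul₀ (sq_nonneg h) zero_le_two
    linarith [sqrt_sub_one_le_half (sq_nonneg h)]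

lemma one_le_sqrt_sq_sub_one_mul_sin {h α : ℝ} (hh : √2 ≤ h) (hα₁ : arcsin (√2 / h) ≤ α)
    (hα₂ : α ≤ π / 2) : 1 ≤ √(h ^ 2 - 1) * sin α := by
  have hh₀ : 0 < h := (sqrt_pos.2 two_pos).trans_le hh
  have hdiv : √2 / h ≤ 1 := (div_le_one hh₀).2 hh
  have hsin : √2 / h ≤ sin α := by
    rw [← sin_arcsin (neg_one_lt_zero.le.trans (by positivity)) hdiv]
    exact sin_le_sin_of_le_of_le_pi_div_two (neg_pi_div_two_le_arcsin _) hα₂ hα₁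
  have hh_sq : 2 ≤ h ^ 2 := (sqrt_le_left hh₀.le).1 hh
  have hinv : h / √2 ≤ √(h ^ 2 - 1) := by
    apply le_sqrt_of_sq_le
    rw [div_pow, sq_sqrt zero_le_two]
    linarith
  calc (1 : ℝ) = h / √2 * (√2 / h) := by field_simp
    _ ≤ √(h ^ 2 - 1) * sin α := by gcongr

/-- **Bound on the instantaneous efficiency for heights at least `√2`.** For `h ≥ √2` and
`arcsin(√2/h) ≤ α ≤ π/2`,
`𝓔(h,α) = (4/h²)(√(h² sin²α − 1) + cos α · arcsin(cot α/√(h²−1))) ≤ 4√(h²−1)/h² ≤ 2`. -/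
theorem instantaneous_efficiency_le_two
    (h α : ℝ) (hh : Real.sqrt 2 ≤ h)
    (hα₁ : Real.arcsin (Real.sqrt 2 / h) ≤ α) (hα₂ : α ≤ π / 2) :
    (4 / h ^ 2) *
        (Real.sqrt (h ^ 2 * Real.sin α ^ 2 - 1) +
          Real.cos α * Real.arcsin ((Real.cos α / Real.sin α) / Real.sqrt (h ^ 2 - 1))) ≤
      4 * Real.sqrt (h ^ 2 - 1) / h ^ 2 ∧
    4 * Real.sqrt (h ^ 2 - 1) / h ^ 2 ≤ 2 :=
  instantaneous_efficiency_le_two_general h α (one_le_sqrt_sq_sub_one_mul_sin hh hα₁ hα₂)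
end
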